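/- Let w_x, w_{x*} be words and W⁺, W⁻ finite word sets with w_x ∉ W⁺ and w_{x*} ∉ W⁻; set W := {w_x} ∪ W⁺ and W_* := {w_{x*}} ∪ W⁻. If every word involved has an embedding with respect to C (Cᵀ.mulVec w⃗_i = PMI_i), then w⃗_{x*} = w⃗_x + ∑_{i∈W⁺} w⃗_i − ∑_{i∈W⁻} w⃗_i + C†.mulVec( ρ^{W,W_*} + σ^W − σ^{W_*} − (τ^W − τ^{W_*})·𝟙 ). (Paper's Corollary 5: embedding-level word transformation.) -/

import Mathlib

/-!
Every error term is a difference of pointwise mutual informations: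
`ρ^{W,W_*}_j = PMI(A_{W_*}, B_j) − PMI(A_W, B_j)` and
`σ^W_j − τ^W = PMI(A_W, B_j) − ∑_{i∈W} PMI(A_i, B_j)`. In the combined error the joint events
cancel, which leaves `∑_{i∈W_*} PMI(A_i, B_j) − ∑_{i∈W} PMI(A_i, B_j)`. This is the image under
`Cᵀ` of the difference of the embedding sums, and `C†` is a left inverse of `Cᵀ`.
-/

open MeasureTheory Real Finset Matrix

namespace AnalogiesExplained

variable {Ω : Type*}

/-- Conditional probability `p(B ∣ A) = μ(A ∩ B) / μ(A)` (as a real number). -/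
noncomputable def condP [MeasurableSpace Ω] (μ : Measure Ω) (A B : Set Ω) : ℝ :=
  (μ (A ∩ B)).toReal / (μ A).toReal

/-- Pointwise mutual information `PMI(A, B) = log (μ(A ∩ B) / (μ(A)·μ(B)))`. -/
noncomputable def PMI [MeasurableSpace Ω] (μ : Measure Ω) (A B : Set Ω) : ℝ :=
  Real.log ((μ (A ∩ B)).toReal / ((μ A).toReal * (μ B).toReal))

/-- The joint event of a finite word set: `A_W = ⋂ i ∈ W, A i`. -/
def jointEvent {ι : Type*} (A : ι → Set Ω) (W : Finset ι) : Set Ω :=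
  ⋂ i ∈ W, A i

/-- Paraphrase error `ρ^{W,W*}_j = log (p(B_j ∣ A_{W*}) / p(B_j ∣ A_W))`. -/
noncomputable def rho [MeasurableSpace Ω] (μ : Measure Ω) (AW AWstar B : Set Ω) : ℝ :=
  Real.log (condP μ AWstar B / condP μ AW B)

/-- Conditional-dependence error `σ^W_j = log (p(A_W ∣ B_j) / ∏_{i ∈ W} p(A_i ∣ B_j))`. -/
noncomputable def sigma [MeasurableSpace Ω] {ι : Type*} (μ : Measure Ω) (A : ι → Set Ω)
    (W : Finset ι) (B : Set Ω) : ℝ :=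
  Real.log (condP μ B (jointEvent A W) / ∏ i ∈ W, condP μ B (A i))

/-- Marginal-dependence error `τ^W = log (μ(A_W) / ∏_{i ∈ W} μ(A_i))`. -/
noncomputable def tau [MeasurableSpace Ω] {ι : Type*} (μ : Measure Ω) (A : ι → Set Ω)
    (W : Finset ι) : ℝ :=
  Real.log ((μ (jointEvent A W)).toReal / ∏ i ∈ W, (μ (A i)).toReal)

theorem jointEvent_subset {ι : Type*} (A : ι → Set Ω) {W : Finset ι} {i : ι} (hi : i ∈ W) :
    jointEvent A W ⊆ A i :=
  Set.biInter_subset_of_mem hi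

section InformationErrors

variable [MeasurableSpace Ω] {μ : Measure Ω} {ι : Type*}

theorem PMI_comm (A B : Set Ω) : PMI μ A B = PMI μ B A := by
  rw [PMI, PMI, Set.inter_comm, mul_comm]

theorem sigma_eq_log_condP_sub_sum {A : ι → Set Ω} {W : Finset ι} {B : Set Ω}
    (hW : condP μ B (jointEvent A W) ≠ 0) (hA : ∀ i ∈ W, condP μ B (A i) ≠ 0) :
    sigma μ A W B =
      Real.log (condP μ B (jointEvent A W)) - ∑ i ∈ W, Real.log (condP μ B (A i)) := by
  rw [sigma, Real.log_div hW (prod_ne_zero_iff.2 hA), Real.log_prod hA]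

theorem tau_eq_log_measureReal_sub_sum {A : ι → Set Ω} {W : Finset ι}
    (hW : μ.real (jointEvent A W) ≠ 0) (hA : ∀ i ∈ W, μ.real (A i) ≠ 0) :
    tau μ A W = Real.log (μ.real (jointEvent A W)) - ∑ i ∈ W, Real.log (μ.real (A i)) := by
  simp only [tau, ← measureReal_def]
  rw [Real.log_div hW (prod_ne_zero_iff.2 hA), Real.log_prod hA]

variable [IsFiniteMeasure μ]

theorem measureReal_pos_of_inter_pos_left {A B : Set Ω} (h : 0 < μ (A ∩ B)) : 0 < μ.real A :=
  ENNReal.toReal_pos (h.trans_le (measure_mono Set.inter_subset_left)).ne' (measure_ne_top μ A)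

theorem condP_pos {A B : Set Ω} (h : 0 < μ (A ∩ B)) : 0 < condP μ A B :=
  div_pos (ENNReal.toReal_pos h.ne' (measure_ne_top μ _)) (measureReal_pos_of_inter_pos_left h)

theorem PMI_eq_log_condP_sub_log {A B : Set Ω} (h : 0 < μ (A ∩ B)) :
    PMI μ A B = Real.log (condP μ A B) - Real.log (μ.real B) := by
  have hB : μ.real B ≠ 0 := (measureReal_pos_of_inter_pos_left (Set.inter_comm A B ▸ h)).ne'
  rw [← Real.log_div (condP_pos h).ne' hB, condP, div_div, PMI, measureReal_def]

theorem rho_eq_PMI_sub_PMI {A A' B : Set Ω} (h : 0 < μ (A ∩ B)) (h' : 0 < μ (A' ∩ B)) :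
    rho μ A A' B = PMI μ A' B - PMI μ A B := by
  rw [rho, Real.log_div (condP_pos h').ne' (condP_pos h).ne', PMI_eq_log_condP_sub_log h,
    PMI_eq_log_condP_sub_log h', sub_sub_sub_cancel_right]

theorem sigma_sub_tau_eq_PMI_sub_sum_PMI {A : ι → Set Ω} {W : Finset ι} {B : Set Ω}
    (h : 0 < μ (jointEvent A W ∩ B)) :
    sigma μ A W B - tau μ A W = PMI μ (jointEvent A W) B - ∑ i ∈ W, PMI μ (A i) B := by
  have hA {i : ι} (hi : i ∈ W) : 0 < μ (A i ∩ B) :=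
    h.trans_le (measure_mono (Set.inter_subset_inter_left B (jointEvent_subset A hi)))
  have hcond {S : Set Ω} (hS : 0 < μ (S ∩ B)) : condP μ B S ≠ 0 :=
    (condP_pos (Set.inter_comm S B ▸ hS)).ne'
  have hmarg {S : Set Ω} (hS : 0 < μ (S ∩ B)) : μ.real S ≠ 0 :=
    (measureReal_pos_of_inter_pos_left hS).ne'
  have hPMI {S : Set Ω} (hS : 0 < μ (S ∩ B)) :
      PMI μ S B = Real.log (condP μ B S) - Real.log (μ.real S) := by
    rw [PMI_comm, PMI_eq_log_condP_sub_log (Set.inter_comm S B ▸ hS)]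
  rw [sigma_eq_log_condP_sub_sum (hcond h) fun i hi => hcond (hA hi),
    tau_eq_log_measureReal_sub_sum (hmarg h) fun i hi => hmarg (hA hi), hPMI h,
    sum_congr rfl fun i hi => hPMI (hA hi), sum_sub_distrib, sub_sub_sub_comm]

theorem sum_PMI_sub_sum_PMI_eq {A : ι → Set Ω} {W Wstar : Finset ι} {B : Set Ω}
    (hW : 0 < μ (jointEvent A W ∩ B)) (hWstar : 0 < μ (jointEvent A Wstar ∩ B)) :
    ∑ i ∈ Wstar, PMI μ (A i) B - ∑ i ∈ W, PMI μ (A i) B =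
      rho μ (jointEvent A W) (jointEvent A Wstar) B + sigma μ A W B - sigma μ A Wstar B
        - (tau μ A W - tau μ A Wstar) := by
  linarith [rho_eq_PMI_sub_PMI hW hWstar, sigma_sub_tau_eq_PMI_sub_sum_PMI hW,
    sigma_sub_tau_eq_PMI_sub_sum_PMI hWstar]

end InformationErrors

theorem inv_mul_mulVec_mulVec {m n R : Type*} [Fintype m] [DecidableEq m] [Fintype n] [CommRing R]
    {M : Matrix m n R} {N : Matrix n m R} (h : IsUnit (M * N)) (v : m → R) :
    ((M * N)⁻¹ * M) *ᵥ (N *ᵥ v) = v := by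
  rw [mulVec_mulVec, Matrix.mul_assoc, nonsing_inv_mul _ ((isUnit_iff_isUnit_det _).1 h),
    one_mulVec]

theorem word_transformation_embedding_general [MeasurableSpace Ω] {μ : Measure Ω}
    [IsFiniteMeasure μ] {ι κ m : Type*} [Fintype κ] [Fintype m] [DecidableEq m]
    {A : ι → Set Ω} {B : κ → Set Ω} {W Wstar : Finset ι}
    (hW : ∀ j, 0 < μ (jointEvent A W ∩ B j)) (hWstar : ∀ j, 0 < μ (jointEvent A Wstar ∩ B j))
    {C : Matrix m κ ℝ} (hC : IsUnit (C * Cᵀ)) {w : ι → m → ℝ}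
    (hwW : ∀ i ∈ W, Cᵀ *ᵥ w i = fun j => PMI μ (A i) (B j))
    (hwWstar : ∀ i ∈ Wstar, Cᵀ *ᵥ w i = fun j => PMI μ (A i) (B j)) :
    ∑ i ∈ Wstar, w i = ∑ i ∈ W, w i + ((C * Cᵀ)⁻¹ * C) *ᵥ
      fun j => rho μ (jointEvent A W) (jointEvent A Wstar) (B j)
        + sigma μ A W (B j) - sigma μ A Wstar (B j) - (tau μ A W - tau μ A Wstar) := by
  have himage : Cᵀ *ᵥ (∑ i ∈ Wstar, w i - ∑ i ∈ W, w i) =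
      fun j => ∑ i ∈ Wstar, PMI μ (A i) (B j) - ∑ i ∈ W, PMI μ (A i) (B j) := by
    rw [mulVec_sub, mulVec_sum, mulVec_sum, sum_congr rfl hwW, sum_congr rfl hwWstar]
    funext j
    rw [Pi.sub_apply, Finset.sum_apply, Finset.sum_apply]
  simp only [← sum_PMI_sub_sum_PMI_eq (hW _) (hWstar _)]
  rw [← himage, inv_mul_mulVec_mulVec hC, add_sub_cancel]

/-- **Corollary 5 (Word transformation at the embedding level).** With `W = {w_x} ∪ W⁺`,
`W_* = {w_{x*}} ∪ W⁻`, if every word involved has an embedding w.r.t. `C`, then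
`w⃗_{x*} = w⃗_x + ∑_{i∈W⁺} w⃗_i − ∑_{i∈W⁻} w⃗_i + C†(ρ^{W,W_*} + σ^W − σ^{W_*} − (τ^W − τ^{W_*})·𝟙)`. -/
theorem word_transformation_embedding
    [MeasurableSpace Ω] (μ : Measure Ω) [IsProbabilityMeasure μ]
    {ι : Type*} [DecidableEq ι] (A : ι → Set Ω) {n : ℕ} (B : Fin n → Set Ω)
    (x xstar : ι) (Wp Wm : Finset ι)
    (hx : x ∉ Wp) (hxs : xstar ∉ Wm)
    (hmA : ∀ i, MeasurableSet (A i)) (hmB : ∀ j, MeasurableSet (B j))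
    (hA : ∀ i ∈ insert x Wp ∪ insert xstar Wm, 0 < (μ (A i)).toReal)
    (hB : ∀ j, 0 < (μ (B j)).toReal)
    (hAW : 0 < (μ (jointEvent A (insert x Wp))).toReal)
    (hAWs : 0 < (μ (jointEvent A (insert xstar Wm))).toReal)
    (hAB : ∀ i ∈ insert x Wp ∪ insert xstar Wm, ∀ j, 0 < (μ (A i ∩ B j)).toReal)
    (hAWB : ∀ j, 0 < (μ (jointEvent A (insert x Wp) ∩ B j)).toReal)
    (hAWsB : ∀ j, 0 < (μ (jointEvent A (insert xstar Wm) ∩ B j)).toReal)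
    {d : ℕ} (C : Matrix (Fin d) (Fin n) ℝ)
    (hC : IsUnit (C * C.transpose))
    (wv : ι → Fin d → ℝ)
    (hwi : ∀ i ∈ insert x Wp ∪ insert xstar Wm,
      C.transpose.mulVec (wv i) = fun j => PMI μ (A i) (B j)) :
    wv xstar = wv x + (∑ i ∈ Wp, wv i) - (∑ i ∈ Wm, wv i)
      + ((C * C.transpose)⁻¹ * C).mulVec
          (fun j => rho μ (jointEvent A (insert x Wp)) (jointEvent A (insert xstar Wm)) (B j)
            + sigma μ A (insert x Wp) (B j) - sigma μ A (insert xstar Wm) (B j)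
            - (tau μ A (insert x Wp) - tau μ A (insert xstar Wm))) := by
  rw [← add_sub_right_comm, eq_sub_iff_add_eq, ← sum_insert hx, ← sum_insert hxs]
  exact word_transformation_embedding_general
    (fun j => (ENNReal.toReal_pos_iff.1 (hAWB j)).1)
    (fun j => (ENNReal.toReal_pos_iff.1 (hAWsB j)).1) hC
    (fun i hi => hwi i (mem_union_left _ hi)) (fun i hi => hwi i (mem_union_right _ hi))

end AnalogiesExplained
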